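/- Let Q be any quiver whose underlying graph is the extended Dynkin diagram Ẽ_8: vertex set {1,2,…,9} with edges {1,2}, {2,3}, {3,4}, {4,5}, {5,9}, {6,9}, {7,8}, {8,9}. Then for every vertex i of Q the frieze sequence (X^i_j)_{j≥0} satisfies a linear recurrence over the field ℚ(x_1,…,x_9). -/

import Mathlib

/-- The (ordered) edge description of the extended Dynkin diagram Ẽ_8 on vertices
`{1,…,9}` : edges `{1,2}, {2,3}, {3,4}, {4,5}, {5,9}, {6,9}, {7,8}, {8,9}`; the vertex labelled
`k ∈ {1,…,9}` corresponds to the index `k−1` of `Fin 9`. -/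
def e8Edge (a b : ℕ) : Prop :=
  (a = 0 ∧ b = 1) ∨ (a = 1 ∧ b = 2) ∨ (a = 2 ∧ b = 3) ∨ (a = 3 ∧ b = 4) ∨
  (a = 4 ∧ b = 8) ∨ (a = 5 ∧ b = 8) ∨ (a = 6 ∧ b = 7) ∨ (a = 7 ∧ b = 8)

/-- The left shift on sequences, as an algebra endomorphism. -/
def seqShift (K : Type*) [CommSemiring K] : (ℕ → K) →ₐ[K] (ℕ → K) where
  toFun f n := f (n + 1)
  map_one' := rfl
  map_mul' _ _ := rfl
  map_zero' := rfl
  map_add' _ _ := rfl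
  commutes' _ := rfl

/-- A sequence is linearly recurrent if it lies in a shift-stable, finitely generated space of
sequences. -/
def LinRec {K : Type*} [Field K] (a : ℕ → K) : Prop :=
  ∃ W : Submodule K (ℕ → K), W.FG ∧ W ≤ W.comap (seqShift K).toLinearMap ∧ a ∈ W

namespace LinRec

variable {K : Type*} [Field K] {a b : ℕ → K}

theorem mul (ha : LinRec a) (hb : LinRec b) : LinRec (fun n => a n * b n) := by
  obtain ⟨V, hV, hVs, haV⟩ := ha
  obtain ⟨W, hW, hWs, hbW⟩ := hb
  refine ⟨V * W, hV.mul hW, ?_, Submodule.mul_mem_mul haV hbW⟩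
  rw [← Submodule.map_le_iff_le_comap] at *
  rw [Submodule.map_mul]
  exact mul_le_mul' hVs hWs

theorem sub (ha : LinRec a) (hb : LinRec b) : LinRec (fun n => a n - b n) := by
  obtain ⟨V, hV, hVs, haV⟩ := ha
  obtain ⟨W, hW, hWs, hbW⟩ := hb
  refine ⟨V ⊔ W, hV.sup hW, sup_le (hVs.trans (Submodule.comap_mono le_sup_left))
    (hWs.trans (Submodule.comap_mono le_sup_right)), ?_⟩
  exact sub_mem (Submodule.mem_sup_left haV) (Submodule.mem_sup_right hbW)

theorem shift (ha : LinRec a) (k : ℕ) : LinRec (fun n => a (n + k)) := by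
  obtain ⟨V, hV, hVs, haV⟩ := ha
  refine ⟨V, hV, hVs, ?_⟩
  induction k with
  | zero => exact haV
  | succ k ih =>
    have : (fun n => a (n + (k + 1))) = seqShift K (fun n => a (n + k)) := by
      funext n; change _ = a (n + 1 + k); congr 1; omega
    rw [this]
    exact hVs ih

theorem of_shift_one (ha : LinRec (fun n => a (n + 1))) : LinRec a := by
  obtain ⟨V, hV, hVs, haV⟩ := ha
  refine ⟨V ⊔ K ∙ a, hV.sup (Submodule.fg_span_singleton a), sup_le
    (hVs.trans (Submodule.comap_mono le_sup_left)) ?_,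
    Submodule.mem_sup_right (Submodule.mem_span_singleton_self a)⟩
  rw [Submodule.span_singleton_le_iff_mem]
  exact Submodule.mem_sup_left haV

theorem of_shift (k : ℕ) (ha : LinRec (fun n => a (n + k))) : LinRec a := by
  induction k with
  | zero => exact ha
  | succ k ih =>
    refine ih (of_shift_one ?_)
    convert ha using 3
    omega

theorem of_recurrence {s : ℕ} (c : Fin s → K)
    (h : ∀ n, a (n + s) = ∑ t : Fin s, c t * a (n + t)) : LinRec a := by
  let v : ℕ → ℕ → K := fun k n => a (n + k)
  have hshift : ∀ k, seqShift K (v k) = v (k + 1) := fun k => by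
    funext n; change a (n + 1 + k) = a (n + (k + 1)); congr 1; omega
  have hs : v s ∈ Submodule.span K (Set.range fun k : Fin s => v k) := by
    have : v s = ∑ t : Fin s, c t • v t := by
      funext n; simp [v, h]
    rw [this]
    exact Submodule.sum_mem _ fun t _ => Submodule.smul_mem _ _ (Submodule.subset_span ⟨t, rfl⟩)
  have hmem : ∀ k ≤ s, v k ∈ Submodule.span K (Set.range fun k : Fin s => v k) := by
    intro k hk
    rcases hk.lt_or_eq with hk | rfl
    · exact Submodule.subset_span ⟨⟨k, hk⟩, rfl⟩
    · exact hs
  refine ⟨Submodule.span K (Set.range fun k : Fin s => v k),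
    Submodule.fg_span (Set.finite_range _), ?_, hmem 0 (Nat.zero_le s)⟩
  rw [Submodule.span_le]
  rintro _ ⟨k, rfl⟩
  change seqShift K (v k) ∈ Submodule.span K (Set.range fun k : Fin s => v k)
  rw [hshift]
  exact hmem _ k.2

theorem of_three_term {s : ℕ} (k : K) (h : ∀ n, a (n + (s + 1) * 2) = k * a (n + (s + 1)) - a n) :
    LinRec a := by
  refine of_recurrence (s := (s + 1) * 2)
    (fun t => if t = ⟨s + 1, by omega⟩ then k else if t = ⟨0, by omega⟩ then -1 else 0)
    fun n => ?_
  rw [h, Finset.sum_eq_add (⟨s + 1, by omega⟩ : Fin _) (⟨0, by omega⟩ : Fin _)]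
  · simp [sub_eq_add_neg]
  · simp
  · rintro t - ⟨h₁, h₂⟩
    rw [if_neg h₁, if_neg h₂, zero_mul]
  · simp
  · simp

theorem of_periodic {s : ℕ} (h : ∀ n, a (n + (s + 1)) = a n) : LinRec a := by
  refine of_recurrence (s := s + 1) (fun t => if t = 0 then 1 else 0) fun n => ?_
  simp [h]

theorem const (k : K) : LinRec (fun _ => k) :=
  of_periodic (s := 0) fun _ => rfl

theorem exists_recurrence (ha : LinRec a) : ∃ s : ℕ, 1 ≤ s ∧ ∃ c : Fin s → K,
    ∀ n, a (n + s) = ∑ t : Fin s, c t * a (n + t) := by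
  obtain ⟨W, hW, hWs, haW⟩ := ha
  have : Module.Finite K W := Module.Finite.iff_fg.mpr hW
  let f : Module.End K W := (seqShift K).toLinearMap.restrict hWs
  have hf : ∀ (k n : ℕ) (w : W), ((f ^ k) w : ℕ → K) n = (w : ℕ → K) (n + k) := by
    intro k
    induction k with
    | zero => intros; rfl
    | succ k ih =>
      intro n w
      rw [pow_succ', Module.End.mul_apply]
      change ((f ^ k) w : ℕ → K) (n + 1) = _
      rw [ih]
      rw [add_right_comm, add_assoc]
  let p : Polynomial K := Polynomial.X * f.charpoly
  have hp : p.Monic := Polynomial.monic_X.mul f.charpoly_monic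
  have hdeg : p.natDegree = f.charpoly.natDegree + 1 := by
    rw [Polynomial.monic_X.natDegree_mul f.charpoly_monic, Polynomial.natDegree_X, add_comm]
  have hp0 : Polynomial.aeval f p = 0 := by
    rw [map_mul, LinearMap.aeval_self_charpoly, mul_zero]
  refine ⟨p.natDegree, by omega, fun t => -p.coeff t, fun n => ?_⟩
  have key : ∑ t ∈ Finset.range (p.natDegree + 1), p.coeff t * a (n + t) = 0 := by
    have h := congrArg (fun g : Module.End K W => (g ⟨a, haW⟩ : ℕ → K) n) hp0
    simpa [Polynomial.aeval_eq_sum_range, hf, LinearMap.sum_apply] using h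
  rw [Finset.sum_range_succ, hp.coeff_natDegree, one_mul] at key
  rw [Finset.sum_range] at key
  simp only [neg_mul, Finset.sum_neg_distrib]
  exact eq_neg_of_add_eq_zero_right key

end LinRec

/-- Sequences satisfying the frieze relations of `Ẽ_8` for the orientation pointing away from the
end `a` of the long arm `a — y₁ — y₂ — y₃ — y₄ — c`; the two short arms at the branch vertex `c`
are `c — z` and `c — w — b`. -/
structure IsE8Frieze {K : Type*} [Field K] (a y₁ y₂ y₃ y₄ c z w b : ℕ → K) : Prop where
  a_ne : ∀ n, a n ≠ 0
  y₁_ne : ∀ n, y₁ n ≠ 0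
  y₂_ne : ∀ n, y₂ n ≠ 0
  y₃_ne : ∀ n, y₃ n ≠ 0
  y₄_ne : ∀ n, y₄ n ≠ 0
  c_ne : ∀ n, c n ≠ 0
  z_ne : ∀ n, z n ≠ 0
  w_ne : ∀ n, w n ≠ 0
  b_ne : ∀ n, b n ≠ 0
  a_mul : ∀ n, a (n + 1) * a n = 1 + y₁ n
  y₁_mul : ∀ n, y₁ (n + 1) * y₁ n = 1 + a (n + 1) * y₂ n
  y₂_mul : ∀ n, y₂ (n + 1) * y₂ n = 1 + y₁ (n + 1) * y₃ n
  y₃_mul : ∀ n, y₃ (n + 1) * y₃ n = 1 + y₂ (n + 1) * y₄ n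
  y₄_mul : ∀ n, y₄ (n + 1) * y₄ n = 1 + y₃ (n + 1) * c n
  c_mul : ∀ n, c (n + 1) * c n = 1 + y₄ (n + 1) * (z n * w n)
  z_mul : ∀ n, z (n + 1) * z n = 1 + c (n + 1)
  w_mul : ∀ n, w (n + 1) * w n = 1 + c (n + 1) * b n
  b_mul : ∀ n, b (n + 1) * b n = 1 + w (n + 1)

namespace IsE8Frieze

variable {K : Type*} [Field K] {a y₁ y₂ y₃ y₄ c z w b : ℕ → K}

theorem y₁_eq (h : IsE8Frieze a y₁ y₂ y₃ y₄ c z w b) (n : ℕ) : y₁ n = a (n + 1) * a n - 1 := by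
  linear_combination -h.a_mul n

theorem y₂_right (h : IsE8Frieze a y₁ y₂ y₃ y₄ c z w b) (n : ℕ) :
    y₂ n = a (n + 2) * y₁ n - a n := by
  apply mul_left_cancel₀ (h.a_ne (n + 1))
  have h₁ : y₁ (n + 1) = a (n + 2) * a (n + 1) - 1 := h.y₁_eq (n + 1)
  linear_combination -h.y₁_mul n + y₁ n * h₁ + h.a_mul n

theorem y₂_left (h : IsE8Frieze a y₁ y₂ y₃ y₄ c z w b) (n : ℕ) :
    y₂ n = a n * y₁ (n + 1) - a (n + 2) := by
  have h₁ : y₁ (n + 1) = a (n + 2) * a (n + 1) - 1 := h.y₁_eq (n + 1)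
  linear_combination h.y₂_right n + a (n + 2) * h.y₁_eq n - a n * h₁

/-- Extending a continuant on the right by condensation. -/
theorem condense_right {p p' q q' r s t : K} (hp : p ≠ 0) (hq : q' = t * p - s)
    (h₁ : p * p' = 1 + s * q) (h₂ : q' * q = 1 + p * r) : r = t * q - p' := by
  apply mul_left_cancel₀ hp
  linear_combination -h₂ + h₁ + q * hq

theorem y₃_right (h : IsE8Frieze a y₁ y₂ y₃ y₄ c z w b) (n : ℕ) :
    y₃ n = a (n + 3) * y₂ n - y₁ n :=
  condense_right (h.y₁_ne (n + 1)) (h.y₂_right (n + 1)) (h.y₁_mul n) (h.y₂_mul n)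

theorem y₄_right (h : IsE8Frieze a y₁ y₂ y₃ y₄ c z w b) (n : ℕ) :
    y₄ n = a (n + 4) * y₃ n - y₂ n :=
  condense_right (h.y₂_ne (n + 1)) (h.y₃_right (n + 1)) (h.y₂_mul n) (h.y₃_mul n)

theorem c_right (h : IsE8Frieze a y₁ y₂ y₃ y₄ c z w b) (n : ℕ) :
    c n = a (n + 5) * y₄ n - y₃ n :=
  condense_right (h.y₃_ne (n + 1)) (h.y₄_right (n + 1)) (h.y₃_mul n) (h.y₄_mul n)

theorem zw_right (h : IsE8Frieze a y₁ y₂ y₃ y₄ c z w b) (n : ℕ) :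
    z n * w n = a (n + 6) * c n - y₄ n :=
  condense_right (h.y₄_ne (n + 1)) (h.c_right (n + 1)) (h.y₄_mul n) (h.c_mul n)

/-- Extending a continuant on the left by condensation. -/
theorem condense_left {p p' q q' r s t : K} (hp : p ≠ 0) (hq : q = t * p - s)
    (h₁ : p' * p = 1 + s * q') (h₂ : q' * q = 1 + p * r) : r = t * q' - p' := by
  apply mul_left_cancel₀ hp
  linear_combination -h₂ + h₁ + q' * hq

theorem y₃_left (h : IsE8Frieze a y₁ y₂ y₃ y₄ c z w b) (n : ℕ) :
    y₃ n = a n * y₂ (n + 1) - y₁ (n + 2) :=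
  condense_left (h.y₁_ne (n + 1)) (h.y₂_left n) (h.y₁_mul (n + 1)) (h.y₂_mul n)

theorem y₄_left (h : IsE8Frieze a y₁ y₂ y₃ y₄ c z w b) (n : ℕ) :
    y₄ n = a n * y₃ (n + 1) - y₂ (n + 2) :=
  condense_left (h.y₂_ne (n + 1)) (h.y₃_left n) (h.y₂_mul (n + 1)) (h.y₃_mul n)

theorem c_left (h : IsE8Frieze a y₁ y₂ y₃ y₄ c z w b) (n : ℕ) :
    c n = a n * y₄ (n + 1) - y₃ (n + 2) :=
  condense_left (h.y₃_ne (n + 1)) (h.y₄_left n) (h.y₃_mul (n + 1)) (h.y₄_mul n)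

theorem zw_left (h : IsE8Frieze a y₁ y₂ y₃ y₄ c z w b) (n : ℕ) :
    z n * w n = a n * c (n + 1) - y₄ (n + 2) :=
  condense_left (h.y₄_ne (n + 1)) (h.c_left n) (h.y₄_mul (n + 1)) (h.c_mul n)

theorem zw_mul (h : IsE8Frieze a y₁ y₂ y₃ y₄ c z w b) (n : ℕ) :
    (z (n + 1) * w (n + 1)) * (z n * w n) = 1 + c (n + 1) * (1 + b n + b n * c (n + 1)) := by
  linear_combination (w (n + 1) * w n) * h.z_mul n + (1 + c (n + 1)) * h.w_mul n

theorem a_mul_w_right (h : IsE8Frieze a y₁ y₂ y₃ y₄ c z w b) (n : ℕ) :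
    a (n + 8) * w (n + 1) = z n + b (n + 1) * z (n + 2) := by
  have h₁ : 1 + b (n + 1) + b (n + 1) * c (n + 2) =
      a (n + 8) * (z (n + 1) * w (n + 1)) - c (n + 1) :=
    condense_right (h.c_ne (n + 2)) (h.zw_right (n + 2)) (h.c_mul (n + 1)) (h.zw_mul (n + 1))
  have h₂ : z (n + 2) * z (n + 1) = 1 + c (n + 2) := h.z_mul (n + 1)
  apply mul_left_cancel₀ (h.z_ne (n + 1))
  linear_combination -h₁ - h.z_mul n - b (n + 1) * h₂

theorem a_mul_w_left (h : IsE8Frieze a y₁ y₂ y₃ y₄ c z w b) (n : ℕ) :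
    a n * w (n + 1) = z (n + 2) + b n * z n := by
  have h₁ : 1 + b n + b n * c (n + 1) = a n * (z (n + 1) * w (n + 1)) - c (n + 2) :=
    condense_left (h.c_ne (n + 1)) (h.zw_left n) (h.c_mul (n + 1)) (h.zw_mul n)
  have h₂ : z (n + 2) * z (n + 1) = 1 + c (n + 2) := h.z_mul (n + 1)
  apply mul_left_cancel₀ (h.z_ne (n + 1))
  linear_combination -h₁ - b n * h.z_mul n - h₂

theorem z_eq (h : IsE8Frieze a y₁ y₂ y₃ y₄ c z w b) (n : ℕ) :
    z n = a n * b (n + 1) - a (n + 8) := by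
  apply mul_left_cancel₀ (h.w_ne (n + 1))
  linear_combination h.a_mul_w_right n - b (n + 1) * h.a_mul_w_left n - z n * h.b_mul n

theorem z_eq' (h : IsE8Frieze a y₁ y₂ y₃ y₄ c z w b) (n : ℕ) :
    z (n + 2) = a (n + 8) * b n - a n := by
  linear_combination -h.a_mul_w_left n - b n * h.z_eq n - a n * h.b_mul n

theorem b_mul_w_right (h : IsE8Frieze a y₁ y₂ y₃ y₄ c z w b) (n : ℕ) :
    b n * w (n + 2) = c (n + 2) + b (n + 2) := by
  have h₁ : b (n + 2) * b (n + 1) = 1 + w (n + 2) := h.b_mul (n + 1)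
  have h₂ : w (n + 2) * w (n + 1) = 1 + c (n + 2) * b (n + 1) := h.w_mul (n + 1)
  apply mul_left_cancel₀ (h.b_ne (n + 1))
  linear_combination w (n + 2) * h.b_mul n - h₁ + h₂

theorem b_mul_w_left (h : IsE8Frieze a y₁ y₂ y₃ y₄ c z w b) (n : ℕ) :
    b (n + 2) * w (n + 1) = c (n + 2) + b n := by
  have h₁ : b (n + 2) * b (n + 1) = 1 + w (n + 2) := h.b_mul (n + 1)
  have h₂ : w (n + 2) * w (n + 1) = 1 + c (n + 2) * b (n + 1) := h.w_mul (n + 1)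
  apply mul_left_cancel₀ (h.b_ne (n + 1))
  linear_combination w (n + 1) * h₁ - h.b_mul n + h₂

theorem a_mul_z_left (h : IsE8Frieze a y₁ y₂ y₃ y₄ c z w b) (n : ℕ) :
    a (n + 1) * z (n + 2) = w (n + 1) + b (n + 3) := by
  have h₁ : a (n + 1) * w (n + 2) = z (n + 3) + b (n + 1) * z (n + 1) := h.a_mul_w_left (n + 1)
  have h₂ : z (n + 2) * z (n + 1) = 1 + c (n + 2) := h.z_mul (n + 1)
  have h₃ : z (n + 3) * z (n + 2) = 1 + c (n + 3) := h.z_mul (n + 2)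
  have h₄ : w (n + 2) * w (n + 1) = 1 + c (n + 2) * b (n + 1) := h.w_mul (n + 1)
  have h₅ : b (n + 3) * w (n + 2) = c (n + 3) + b (n + 1) := h.b_mul_w_left (n + 1)
  apply mul_left_cancel₀ (h.w_ne (n + 2))
  linear_combination z (n + 2) * h₁ + h₃ + b (n + 1) * h₂ - h₄ - h₅

theorem a_mul_z_right (h : IsE8Frieze a y₁ y₂ y₃ y₄ c z w b) (n : ℕ) :
    a (n + 9) * z (n + 2) = w (n + 3) + b n := by
  have h₁ : a (n + 9) * w (n + 2) = z (n + 1) + b (n + 2) * z (n + 3) := h.a_mul_w_right (n + 1)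
  have h₂ : z (n + 2) * z (n + 1) = 1 + c (n + 2) := h.z_mul (n + 1)
  have h₃ : z (n + 3) * z (n + 2) = 1 + c (n + 3) := h.z_mul (n + 2)
  have h₄ : w (n + 3) * w (n + 2) = 1 + c (n + 3) * b (n + 2) := h.w_mul (n + 2)
  apply mul_left_cancel₀ (h.w_ne (n + 2))
  linear_combination z (n + 2) * h₁ + h₂ + b (n + 2) * h₃ - h₄ - h.b_mul_w_right n

theorem b_mul_c_right (h : IsE8Frieze a y₁ y₂ y₃ y₄ c z w b) (n : ℕ) :
    b n * c (n + 3) = z (n + 2) * y₄ (n + 3) + w (n + 3) := by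
  have h₁ : c (n + 3) * c (n + 2) = 1 + y₄ (n + 3) * (z (n + 2) * w (n + 2)) := h.c_mul (n + 2)
  have h₂ : w (n + 3) * w (n + 2) = 1 + c (n + 3) * b (n + 2) := h.w_mul (n + 2)
  apply mul_left_cancel₀ (h.w_ne (n + 2))
  linear_combination c (n + 3) * h.b_mul_w_right n + h₁ - h₂

theorem b_mul_c_left (h : IsE8Frieze a y₁ y₂ y₃ y₄ c z w b) (n : ℕ) :
    b (n + 5) * c (n + 4) = z (n + 4) * y₄ (n + 5) + w (n + 3) := by
  have h₁ : c (n + 5) * c (n + 4) = 1 + y₄ (n + 5) * (z (n + 4) * w (n + 4)) := h.c_mul (n + 4)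
  have h₂ : w (n + 4) * w (n + 3) = 1 + c (n + 4) * b (n + 3) := h.w_mul (n + 3)
  have h₃ : b (n + 5) * w (n + 4) = c (n + 5) + b (n + 3) := h.b_mul_w_left (n + 3)
  apply mul_left_cancel₀ (h.w_ne (n + 4))
  linear_combination c (n + 4) * h₃ + h₁ - h₂

theorem b_add_b (h : IsE8Frieze a y₁ y₂ y₃ y₄ c z w b) (n : ℕ) :
    b n * c (n + 3) + b (n + 5) = z (n + 2) * y₄ (n + 3) + z (n + 4) * a (n + 3) := by
  have h₁ : a (n + 3) * z (n + 4) = w (n + 3) + b (n + 5) := h.a_mul_z_left (n + 2)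
  linear_combination h.b_mul_c_right n - h₁

theorem b_mul_y₄ (h : IsE8Frieze a y₁ y₂ y₃ y₄ c z w b) (n : ℕ) :
    b n * y₄ (n + 4) = z (n + 2) * y₃ (n + 4) + z (n + 4) := by
  have h₁ : b n + b (n + 5) * c (n + 4) = z (n + 2) * a (n + 9) + z (n + 4) * y₄ (n + 5) := by
    linear_combination h.b_mul_c_left n - h.a_mul_z_right n
  have h₂ : c (n + 4) * c (n + 3) = 1 + y₄ (n + 4) * (z (n + 3) * w (n + 3)) := h.c_mul (n + 3)
  have h₃ : z (n + 3) * w (n + 3) = a (n + 9) * c (n + 3) - y₄ (n + 3) := h.zw_right (n + 3)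
  have h₄ : z (n + 3) * w (n + 3) = a (n + 3) * c (n + 4) - y₄ (n + 5) := h.zw_left (n + 3)
  have h₅ : y₄ (n + 4) * y₄ (n + 3) = 1 + y₃ (n + 4) * c (n + 3) := h.y₄_mul (n + 3)
  have h₆ : c (n + 4) = a (n + 9) * y₄ (n + 4) - y₃ (n + 4) := h.c_right (n + 4)
  apply mul_left_cancel₀ (mul_ne_zero (h.z_ne (n + 3)) (h.w_ne (n + 3)))
  linear_combination c (n + 4) * h.b_add_b n - h₁ - b n * h₂ - z (n + 4) * h₄ +
    z (n + 2) * (y₄ (n + 3) * h₆ + a (n + 9) * h₅ - y₃ (n + 4) * h₃)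

theorem b_mul_y₃ (h : IsE8Frieze a y₁ y₂ y₃ y₄ c z w b) (n : ℕ) :
    b n * y₃ (n + 5) = z (n + 2) * y₂ (n + 5) + b (n + 5) := by
  have h₁ : c (n + 3) = a (n + 3) * y₄ (n + 4) - y₃ (n + 5) := h.c_left (n + 3)
  have h₂ : y₄ (n + 3) = a (n + 3) * y₃ (n + 4) - y₂ (n + 5) := h.y₄_left (n + 3)
  linear_combination a (n + 3) * h.b_mul_y₄ n - h.b_add_b n + b n * h₁ - z (n + 2) * h₂

theorem b_mul_y₂ (h : IsE8Frieze a y₁ y₂ y₃ y₄ c z w b) (n : ℕ) :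
    b n * y₂ (n + 6) = z (n + 2) * y₁ (n + 6) + b (n + 5) * a (n + 4) - z (n + 4) := by
  have h₁ : y₄ (n + 4) = a (n + 4) * y₃ (n + 5) - y₂ (n + 6) := h.y₄_left (n + 4)
  have h₂ : y₃ (n + 4) = a (n + 4) * y₂ (n + 5) - y₁ (n + 6) := h.y₃_left (n + 4)
  linear_combination a (n + 4) * h.b_mul_y₃ n - h.b_mul_y₄ n + b n * h₁ - z (n + 2) * h₂

theorem b_mul_y₁ (h : IsE8Frieze a y₁ y₂ y₃ y₄ c z w b) (n : ℕ) :
    b n * y₁ (n + 7) = z (n + 2) * a (n + 7) + b (n + 5) * y₁ (n + 4) - z (n + 4) * a (n + 5) := by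
  have h₁ : y₃ (n + 5) = a (n + 5) * y₂ (n + 6) - y₁ (n + 7) := h.y₃_left (n + 5)
  have h₂ : y₂ (n + 5) = a (n + 5) * y₁ (n + 6) - a (n + 7) := h.y₂_left (n + 5)
  have h₃ : y₁ (n + 4) = a (n + 5) * a (n + 4) - 1 := h.y₁_eq (n + 4)
  linear_combination a (n + 5) * h.b_mul_y₂ n - h.b_mul_y₃ n + b n * h₁ - z (n + 2) * h₂ -
    b (n + 5) * h₃

/-- The quantity `a n * a (n + 7) - b n` is attached to the tube of rank five. -/
theorem periodic (h : IsE8Frieze a y₁ y₂ y₃ y₄ c z w b) (n : ℕ) :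
    a (n + 5) * a (n + 12) - b (n + 5) = a n * a (n + 7) - b n := by
  have h₁ : y₁ (n + 7) = a (n + 8) * a (n + 7) - 1 := h.y₁_eq (n + 7)
  have h₂ : y₁ (n + 4) = a (n + 5) * a (n + 4) - 1 := h.y₁_eq (n + 4)
  have h₃ : z (n + 4) = a (n + 4) * b (n + 5) - a (n + 12) := h.z_eq (n + 4)
  linear_combination b n * h₁ - b (n + 5) * h₂ - h.b_mul_y₁ n - a (n + 7) * h.z_eq' n +
    a (n + 5) * h₃

theorem a_add_twelve (h : IsE8Frieze a y₁ y₂ y₃ y₄ c z w b) (n : ℕ) :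
    a (n + 12) = (a n * a (n + 7) - b n) * a (n + 6) - a n := by
  have h₁ : y₂ (n + 6) = a (n + 8) * y₁ (n + 6) - a (n + 6) := h.y₂_right (n + 6)
  have h₂ : y₁ (n + 6) = a (n + 7) * a (n + 6) - 1 := h.y₁_eq (n + 6)
  have h₃ : z (n + 4) = a (n + 4) * b (n + 5) - a (n + 12) := h.z_eq (n + 4)
  linear_combination -h.b_mul_y₂ n + b n * h₁ - y₁ (n + 6) * h.z_eq' n + h₃ + a n * h₂

/-- A three-term recurrence of step six whose coefficient has period five yields a three-term
recurrence of step thirty with constant coefficients. -/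
theorem linRec_of_periodic {e : ℕ → K} (he : ∀ n, e (n + 5) = e n)
    (ha : ∀ n, a (n + 12) = e n * a (n + 6) - a n) : LinRec a := by
  let t : ℕ → K := fun n =>
    e n * e (n + 1) * e (n + 2) * e (n + 3) * e (n + 4)
      - e n * e (n + 1) * e (n + 2) - e (n + 1) * e (n + 2) * e (n + 3)
      - e (n + 2) * e (n + 3) * e (n + 4) - e (n + 3) * e (n + 4) * e n
      - e (n + 4) * e n * e (n + 1)
      + e n + e (n + 1) + e (n + 2) + e (n + 3) + e (n + 4)
  have ht : ∀ n, t n = t 0 := by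
    intro n
    induction n with
    | zero => rfl
    | succ n ih =>
      rw [← ih]
      have h₅ : e (n + 1 + 4) = e n := he n
      simp only [t, h₅]
      ring_nf
  refine LinRec.of_three_term (s := 29) (t 0) fun n => ?_
  have E : ∀ k m, e (n + (k + 5 * m)) = e (n + k) := by
    intro k m
    induction m with
    | zero => rfl
    | succ m ih => exact (he _).trans ih
  have h₀ := ha n
  have h₁ : a (n + 18) = e (n + 1) * a (n + 12) - a (n + 6) := E 1 1 ▸ ha (n + 6)
  have h₂ : a (n + 24) = e (n + 2) * a (n + 18) - a (n + 12) := E 2 2 ▸ ha (n + 12)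
  have h₃ : a (n + 30) = e (n + 3) * a (n + 24) - a (n + 18) := E 3 3 ▸ ha (n + 18)
  have h₄ : a (n + 36) = e (n + 4) * a (n + 30) - a (n + 24) := E 4 4 ▸ ha (n + 24)
  have h₅ : a (n + 42) = e n * a (n + 36) - a (n + 30) := E 0 6 ▸ ha (n + 30)
  have h₆ : a (n + 48) = e (n + 1) * a (n + 42) - a (n + 36) := E 1 7 ▸ ha (n + 36)
  have h₇ : a (n + 54) = e (n + 2) * a (n + 48) - a (n + 42) := E 2 8 ▸ ha (n + 42)
  have h₈ : a (n + 60) = e (n + 3) * a (n + 54) - a (n + 48) := E 3 9 ▸ ha (n + 48)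
  rw [← ht n]
  change a (n + 60) = t n * a (n + 30) - a n
  rw [h₈, h₇, h₆, h₅, h₄, h₃, h₂, h₁, h₀]
  simp only [t]
  ring

theorem linRec (h : IsE8Frieze a y₁ y₂ y₃ y₄ c z w b) :
    LinRec a ∧ LinRec y₁ ∧ LinRec y₂ ∧ LinRec y₃ ∧ LinRec y₄ ∧ LinRec c ∧ LinRec z ∧ LinRec w ∧
      LinRec b := by
  have ha : LinRec a := linRec_of_periodic h.periodic h.a_add_twelve
  have hy₁ : LinRec y₁ := by
    rw [funext h.y₁_eq]
    exact ((ha.shift 1).mul ha).sub (LinRec.const 1)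
  have hy₂ : LinRec y₂ := by
    rw [funext h.y₂_right]
    exact ((ha.shift 2).mul hy₁).sub ha
  have hy₃ : LinRec y₃ := by
    rw [funext h.y₃_right]
    exact ((ha.shift 3).mul hy₂).sub hy₁
  have hy₄ : LinRec y₄ := by
    rw [funext h.y₄_right]
    exact ((ha.shift 4).mul hy₃).sub hy₂
  have hc : LinRec c := by
    rw [funext h.c_right]
    exact ((ha.shift 5).mul hy₄).sub hy₃
  have hb : LinRec b := by
    have hb' : b = fun n => a n * a (n + 7) - (a n * a (n + 7) - b n) := by
      funext n
      ring
    rw [hb']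
    exact (ha.mul (ha.shift 7)).sub (LinRec.of_periodic (s := 4) h.periodic)
  have hz : LinRec z := by
    rw [funext h.z_eq]
    exact (ha.mul (hb.shift 1)).sub (ha.shift 8)
  have hw : LinRec w := by
    apply LinRec.of_shift_one
    have hw' : (fun n => w (n + 1)) = fun n => b (n + 1) * b n - 1 := by
      funext n
      linear_combination -h.b_mul n
    rw [hw']
    exact ((hb.shift 1).mul hb).sub (LinRec.const 1)
  exact ⟨ha, hy₁, hy₂, hy₃, hy₄, hc, hz, hw, hb⟩

end IsE8Frieze

/-- The set of fractions of polynomials both of whose parts are positive at the point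
`(1, …, 1)`. -/
def positiveFractions (σ : Type*) : Set (FractionRing (MvPolynomial σ ℚ)) :=
  {x | ∃ p q : MvPolynomial σ ℚ, 0 < MvPolynomial.eval 1 p ∧ 0 < MvPolynomial.eval 1 q ∧
    x * algebraMap _ _ q = algebraMap _ _ p}

namespace positiveFractions

variable {σ : Type*} {x y : FractionRing (MvPolynomial σ ℚ)}

theorem algebraMap_ne_zero {p : MvPolynomial σ ℚ} (hp : 0 < MvPolynomial.eval 1 p) :
    algebraMap _ (FractionRing (MvPolynomial σ ℚ)) p ≠ 0 := by
  rw [Ne, FaithfulSMul.algebraMap_eq_zero_iff]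
  rintro rfl
  simp at hp

theorem ne_zero (hx : x ∈ positiveFractions σ) : x ≠ 0 := by
  obtain ⟨p, q, hp, -, h⟩ := hx
  rintro rfl
  exact algebraMap_ne_zero hp (by rw [← h, zero_mul])

theorem one_mem : (1 : FractionRing (MvPolynomial σ ℚ)) ∈ positiveFractions σ :=
  ⟨1, 1, by simp, by simp, by simp⟩

theorem var_mem (v : σ) :
    algebraMap (MvPolynomial σ ℚ) (FractionRing (MvPolynomial σ ℚ)) (MvPolynomial.X v) ∈
      positiveFractions σ :=
  ⟨MvPolynomial.X v, 1, by simp, by simp, by simp⟩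

theorem mul_mem (hx : x ∈ positiveFractions σ) (hy : y ∈ positiveFractions σ) :
    x * y ∈ positiveFractions σ := by
  obtain ⟨p, q, hp, hq, h⟩ := hx
  obtain ⟨p', q', hp', hq', h'⟩ := hy
  refine ⟨p * p', q * q', by simpa using mul_pos hp hp', by simpa using mul_pos hq hq', ?_⟩
  rw [map_mul, map_mul, ← h, ← h']
  ring

theorem add_mem (hx : x ∈ positiveFractions σ) (hy : y ∈ positiveFractions σ) :
    x + y ∈ positiveFractions σ := by
  obtain ⟨p, q, hp, hq, h⟩ := hx
  obtain ⟨p', q', hp', hq', h'⟩ := hy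
  refine ⟨p * q' + p' * q, q * q', ?_, by simpa using mul_pos hq hq', ?_⟩
  · simpa using add_pos (mul_pos hp hq') (mul_pos hp' hq)
  · rw [map_mul, map_add, map_mul, map_mul, ← h, ← h']
    ring

theorem of_mul_mem (hxy : x * y ∈ positiveFractions σ) (hy : y ∈ positiveFractions σ) :
    x ∈ positiveFractions σ := by
  obtain ⟨p, q, hp, hq, h⟩ := hxy
  obtain ⟨p', q', hp', hq', h'⟩ := hy
  refine ⟨p * q', q * p', by simpa using mul_pos hp hq', by simpa using mul_pos hq hp', ?_⟩
  rw [map_mul, map_mul, ← h, ← h']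
  ring

end positiveFractions

/-- The frieze relation over an arbitrary orientation of `Ẽ_8`, with the exponents of
the arrows absorbed into index shifts. -/
theorem e8_frieze_relation {K : Type*} [Field K] (mult : Fin 9 → Fin 9 → ℕ)
    (hedge : ∀ u v : Fin 9, e8Edge u.val v.val → mult u v + mult v u = 1)
    (hnonedge : ∀ u v : Fin 9, ¬ e8Edge u.val v.val → ¬ e8Edge v.val u.val → mult u v = 0)
    (X : Fin 9 → ℕ → K)
    (hXrec : ∀ v (j : ℕ), X v (j+1) * X v j =
      1 + (∏ s : Fin 9, X s (j+1) ^ mult s v) * (∏ d : Fin 9, X d j ^ mult v d))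
    (v : Fin 9) (j : ℕ) :
    X v (j + 1) * X v j = 1 + ∏ u : Fin 9,
      open Classical in if e8Edge u v ∨ e8Edge v u then X u (j + mult u v) else 1 := by
  classical
  rw [hXrec, ← Finset.prod_mul_distrib]
  congr 1
  refine Finset.prod_congr rfl fun u _ => ?_
  split_ifs with h
  · have hsum : mult u v + mult v u = 1 := by
      rcases h with h | h
      · exact hedge u v h
      · rw [add_comm]
        exact hedge v u h
    obtain ⟨h₁, h₂⟩ | ⟨h₁, h₂⟩ := Nat.add_eq_one_iff.mp hsum <;> simp [h₁, h₂]
  · rw [not_or] at h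
    simp [hnonedge u v h.1 h.2, hnonedge v u h.2 h.1]

open positiveFractions in
/-- Over a finite quiver with a topological order `h` of its vertices, all values of the frieze
sequences are positive fractions. -/
theorem frieze_mem_positiveFractions {V : Type*} [Fintype V] (mult : V → V → ℕ) (h : V → ℕ)
    (hh : ∀ u v, mult u v ≠ 0 → h u < h v)
    (X : V → ℕ → FractionRing (MvPolynomial V ℚ))
    (hX0 : ∀ v, X v 0 = algebraMap (MvPolynomial V ℚ)
      (FractionRing (MvPolynomial V ℚ)) (MvPolynomial.X v))
    (hXrec : ∀ v (j : ℕ), X v (j+1) * X v j =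
      1 + (∏ s : V, X s (j+1) ^ mult s v) * (∏ d : V, X d j ^ mult v d))
    (j : ℕ) (v : V) : X v j ∈ positiveFractions V := by
  have prod_mem : ∀ (f : V → FractionRing (MvPolynomial V ℚ)) (e : V → ℕ),
      (∀ u, e u ≠ 0 → f u ∈ positiveFractions V) →
      ∏ u : V, f u ^ e u ∈ positiveFractions V := by
    intro f e hf
    refine Finset.prod_induction _ (· ∈ positiveFractions V) (fun _ _ => mul_mem) one_mem ?_
    intro u _
    by_cases he : e u = 0
    · simpa [he] using one_mem
    · generalize e u = k
      induction k with
      | zero => simpa using one_mem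
      | succ k ih =>
        rw [pow_succ]
        exact mul_mem ih (hf u he)
  induction j generalizing v with
  | zero =>
    rw [hX0]
    exact var_mem v
  | succ j ih =>
    induction hn : h v using Nat.strong_induction_on generalizing v with
    | _ n ihn =>
      subst hn
      refine of_mul_mem ?_ (ih v)
      rw [hXrec]
      exact add_mem one_mem (mul_mem (prod_mem _ _ fun u hu => ihn _ (hh u v hu) u rfl)
        (prod_mem _ _ fun u _ => ih u))

/-- Let `Q` be any orientation of Ẽ_8, encoded by the arrow multiplicity
function `mult` : for each edge `{u,v}` there is exactly one arrow between `u` and `v`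
(in one of the two directions), and there are no other arrows. Then every frieze
sequence `(X^i_j)_j` in `ℚ(x_1,…,x_9)` satisfies a linear recurrence. -/
theorem stmt_4
    (mult : Fin 9 → Fin 9 → ℕ)   -- number of arrows from `u` to `v`
    (hedge : ∀ u v : Fin 9, e8Edge u.val v.val → mult u v + mult v u = 1)
    (hnonedge : ∀ u v : Fin 9, ¬ e8Edge u.val v.val → ¬ e8Edge v.val u.val → mult u v = 0)
    -- the frieze sequences
    (X : Fin 9 → ℕ → FractionRing (MvPolynomial (Fin 9) ℚ))
    (hX0 : ∀ v, X v 0 = algebraMap (MvPolynomial (Fin 9) ℚ)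
      (FractionRing (MvPolynomial (Fin 9) ℚ)) (MvPolynomial.X v))
    (hXrec : ∀ v (j : ℕ), X v (j+1) * X v j =
      1 + (∏ s : Fin 9, X s (j+1) ^ mult s v) * (∏ d : Fin 9, X d j ^ mult v d)) :
    -- every frieze sequence satisfies a linear recurrence
    ∀ i : Fin 9, ∃ s : ℕ, 1 ≤ s ∧
      ∃ coeff : Fin s → FractionRing (MvPolynomial (Fin 9) ℚ),
        ∀ j : ℕ, X i (j + s) = ∑ t : Fin s, coeff t * X i (j + t.val) := by
  have e01 := hedge 0 1 (by simp [e8Edge])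
  have e12 := hedge 1 2 (by simp [e8Edge])
  have e23 := hedge 2 3 (by simp [e8Edge])
  have e34 := hedge 3 4 (by simp [e8Edge])
  have e48 := hedge 4 8 (by simp [e8Edge])
  have e58 := hedge 5 8 (by simp [e8Edge])
  have e67 := hedge 6 7 (by simp [e8Edge])
  have e78 := hedge 7 8 (by simp [e8Edge])
  have hne : ∀ v j, X v j ≠ 0 := by
    intro v j
    let h1 := 8 + mult 0 1 - mult 1 0
    let h2 := h1 + mult 1 2 - mult 2 1
    let h3 := h2 + mult 2 3 - mult 3 2
    let h4 := h3 + mult 3 4 - mult 4 3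
    let h8 := h4 + mult 4 8 - mult 8 4
    let h5 := h8 + mult 8 5 - mult 5 8
    let h7 := h8 + mult 8 7 - mult 7 8
    let h6 := h7 + mult 7 6 - mult 6 7
    refine positiveFractions.ne_zero (frieze_mem_positiveFractions mult
      ![8, h1, h2, h3, h4, h5, h6, h7, h8] ?_ X hX0 hXrec j v)
    intro u v huv
    have hadj : e8Edge u v ∨ e8Edge v u := by
      by_contra hcon
      rw [not_or] at hcon
      exact huv (hnonedge u v hcon.1 hcon.2)
    fin_cases u <;> fin_cases v <;> simp [e8Edge] at hadj <;> simp at huv ⊢ <;> omega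
  have hrel := e8_frieze_relation mult hedge hnonedge X hXrec
  have r0 : ∀ j i p, i = j + 1 → p = j + mult 1 0 →
      X 0 i * X 0 j = 1 + X 1 p := by
    rintro j _ _ rfl rfl
    rw [hrel]
    simp [Fin.prod_univ_succ, e8Edge]
  have r1 : ∀ j i p q, i = j + 1 → p = j + mult 0 1 → q = j + mult 2 1 →
      X 1 i * X 1 j = 1 + X 0 p * X 2 q := by
    rintro j _ _ _ rfl rfl rfl
    rw [hrel]
    simp [Fin.prod_univ_succ, e8Edge]
  have r2 : ∀ j i p q, i = j + 1 → p = j + mult 1 2 → q = j + mult 3 2 →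
      X 2 i * X 2 j = 1 + X 1 p * X 3 q := by
    rintro j _ _ _ rfl rfl rfl
    rw [hrel]
    simp [Fin.prod_univ_succ, e8Edge]
  have r3 : ∀ j i p q, i = j + 1 → p = j + mult 2 3 → q = j + mult 4 3 →
      X 3 i * X 3 j = 1 + X 2 p * X 4 q := by
    rintro j _ _ _ rfl rfl rfl
    rw [hrel]
    simp [Fin.prod_univ_succ, e8Edge]
  have r4 : ∀ j i p q, i = j + 1 → p = j + mult 3 4 → q = j + mult 8 4 →
      X 4 i * X 4 j = 1 + X 3 p * X 8 q := by
    rintro j _ _ _ rfl rfl rfl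
    rw [hrel]
    simp [Fin.prod_univ_succ, e8Edge]
  have r8 : ∀ j i p q r, i = j + 1 → p = j + mult 4 8 → q = j + mult 5 8 → r = j + mult 7 8 →
      X 8 i * X 8 j = 1 + X 4 p * (X 5 q * X 7 r) := by
    rintro j _ _ _ _ rfl rfl rfl rfl
    rw [hrel]
    simp [Fin.prod_univ_succ, e8Edge]
  have r5 : ∀ j i p, i = j + 1 → p = j + mult 8 5 →
      X 5 i * X 5 j = 1 + X 8 p := by
    rintro j _ _ rfl rfl
    rw [hrel]
    simp [Fin.prod_univ_succ, e8Edge]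
  have r7 : ∀ j i p q, i = j + 1 → p = j + mult 8 7 → q = j + mult 6 7 →
      X 7 i * X 7 j = 1 + X 8 p * X 6 q := by
    rintro j _ _ _ rfl rfl rfl
    rw [hrel]
    simp [Fin.prod_univ_succ, e8Edge, mul_comm]
  have r6 : ∀ j i p, i = j + 1 → p = j + mult 7 6 →
      X 6 i * X 6 j = 1 + X 7 p := by
    rintro j _ _ rfl rfl
    rw [hrel]
    simp [Fin.prod_univ_succ, e8Edge]
  obtain ⟨k1, hk1⟩ : ∃ k, k = mult 1 0 := ⟨_, rfl⟩
  obtain ⟨k2, hk2⟩ : ∃ k, k = k1 + mult 2 1 := ⟨_, rfl⟩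
  obtain ⟨k3, hk3⟩ : ∃ k, k = k2 + mult 3 2 := ⟨_, rfl⟩
  obtain ⟨k4, hk4⟩ : ∃ k, k = k3 + mult 4 3 := ⟨_, rfl⟩
  obtain ⟨k8, hk8⟩ : ∃ k, k = k4 + mult 8 4 := ⟨_, rfl⟩
  obtain ⟨k5, hk5⟩ : ∃ k, k = k8 + mult 5 8 := ⟨_, rfl⟩
  obtain ⟨k7, hk7⟩ : ∃ k, k = k8 + mult 7 8 := ⟨_, rfl⟩
  obtain ⟨k6, hk6⟩ : ∃ k, k = k7 + mult 6 7 := ⟨_, rfl⟩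
  have frieze : IsE8Frieze (X 0) (fun n => X 1 (n + k1)) (fun n => X 2 (n + k2))
      (fun n => X 3 (n + k3))
      (fun n => X 4 (n + k4)) (fun n => X 8 (n + k8)) (fun n => X 5 (n + k5))
      (fun n => X 7 (n + k7)) (fun n => X 6 (n + k6)) := by
    constructor
    iterate 9 exact fun n => hne _ _
    · exact fun n => r0 _ _ _ (by omega) (by omega)
    · exact fun n => r1 _ _ _ _ (by omega) (by omega) (by omega)
    · exact fun n => r2 _ _ _ _ (by omega) (by omega) (by omega)
    · exact fun n => r3 _ _ _ _ (by omega) (by omega) (by omega)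
    · exact fun n => r4 _ _ _ _ (by omega) (by omega) (by omega)
    · exact fun n => r8 _ _ _ _ _ (by omega) (by omega) (by omega) (by omega)
    · exact fun n => r5 _ _ _ (by omega) (by omega)
    · exact fun n => r7 _ _ _ _ (by omega) (by omega) (by omega)
    · exact fun n => r6 _ _ _ (by omega) (by omega)
  obtain ⟨l0, l1, l2, l3, l4, l8, l5, l7, l6⟩ := frieze.linRec
  intro i
  apply LinRec.exists_recurrence
  fin_cases i
  · exact l0
  · exact LinRec.of_shift k1 l1
  · exact LinRec.of_shift k2 l2
  · exact LinRec.of_shift k3 l3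
  · exact LinRec.of_shift k4 l4
  · exact LinRec.of_shift k5 l5
  · exact LinRec.of_shift k6 l6
  · exact LinRec.of_shift k7 l7
  · exact LinRec.of_shift k8 l8
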